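/- Let s ≥ 0. There exists a constant C > 0 with the following property: for all x, y ∈ ℝ with 0 < r := |x−y|/4 < 1, and for all smooth compactly supported functions f, g : ℝ → ℝ with supp f ⊆ (x−r, x+r) and supp g ⊆ (y−r, y+r), one has ‖f+g‖_{H^s}² ≥ C (‖f‖_{H^s}² + ‖g‖_{H^s}²). -/

import Mathlib

open MeasureTheory FourierTransform

/-- The squared inhomogeneous Sobolev norm of index `s` of a function `f : ℝ → ℝ`,
`‖f‖_{H^s}² = ∫ (1+|ξ|²)^s |f̂(ξ)|² dξ`. -/
noncomputable def sobolevNormSq (s : ℝ) (f : ℝ → ℝ) : ℝ :=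
  ∫ ξ : ℝ, (1 + ξ ^ 2) ^ s * ‖𝓕 (fun x : ℝ => (f x : ℂ)) ξ‖ ^ 2

open SchwartzMap
open scoped ENNReal

lemma cs_lintegral {a b : ℝ → ℝ≥0∞} (ha : Measurable a) (hb : Measurable b) :
    (∫⁻ x, a x * b x) ^ 2 ≤ (∫⁻ x, a x) * ∫⁻ x, a x * b x ^ 2 := by
  have h := ENNReal.lintegral_mul_le_Lp_mul_Lq volume Real.HolderConjugate.two_two
    (f := fun x => a x ^ (1/2 : ℝ)) (g := fun x => a x ^ (1/2 : ℝ) * b x)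
    (ha.pow_const _).aemeasurable ((ha.pow_const _).mul hb).aemeasurable
  have e1 : ∀ z : ℝ≥0∞, (z ^ (1/2 : ℝ)) ^ (2:ℝ) = z := fun z => by
    rw [← ENNReal.rpow_mul]; norm_num
  have e2 : ∀ z : ℝ≥0∞, (z ^ (1/2 : ℝ)) * z ^ (1/2 : ℝ) = z := fun z => by
    rw [← sq, ← ENNReal.rpow_two, e1]
  have e3 : ∀ z : ℝ≥0∞, (z ^ (1/2 : ℝ)) ^ 2 = z := fun z => by
    rw [← ENNReal.rpow_two, e1]
  simp only [Pi.mul_apply, ENNReal.mul_rpow_of_nonneg _ _ (zero_le_two : (0:ℝ) ≤ 2), e1, ← mul_assoc, e2] at h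
  calc _ ≤ _ := pow_le_pow_left' h 2
    _ = _ := by
      rw [mul_pow, e3, e3]
      simp only [ENNReal.rpow_two]

lemma mult_formula (ψ H F : 𝓢(ℝ, ℂ)) (c r : ℝ) (hF : ∀ t, F t = ψ ((t - c) / r) * H t) (ξ : ℝ) :
    ‖𝓕 (F : ℝ → ℂ) ξ‖ₑ ≤ ∫⁻ η, ‖𝓕 (ψ : ℝ → ℂ) η‖ₑ * ‖𝓕 (H : ℝ → ℂ) (ξ - η / r)‖ₑ := by
  have hinv : ∀ u, ψ u = ∫ η, Complex.exp (↑(2 * Real.pi * (η * u)) * Complex.I) * 𝓕 (ψ : ℝ → ℂ) η := by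
    intro u
    have h1 := ψ.continuous.fourierInv_fourier_eq ψ.integrable (by
      rw [← SchwartzMap.fourier_coe]; exact (𝓕 ψ).integrable)
    conv_lhs => rw [← h1]
    rw [Real.fourierInv_eq']
    simp [mul_comm]
  have key : 𝓕 (F : ℝ → ℂ) ξ = ∫ η, (𝓕 (ψ : ℝ → ℂ) η * Complex.exp (↑(-2 * Real.pi * (η * c / r)) * Complex.I)) *
      𝓕 (H : ℝ → ℂ) (ξ - η / r) := by
    rw [Real.fourier_eq']
    simp_rw [hF, hinv, Real.fourier_eq' (H : ℝ → ℂ)]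
    simp_rw [← integral_const_mul, smul_eq_mul, ← integral_mul_const, ← integral_const_mul]
    rw [integral_integral_swap]
    · congr 1; ext η; congr 1; ext t
      have e : Complex.exp (↑(-2 * Real.pi * inner ℝ t ξ) * Complex.I) *
          Complex.exp (↑(2 * Real.pi * (η * ((t - c) / r))) * Complex.I) =
          Complex.exp (↑(-2 * Real.pi * (η * c / r)) * Complex.I) *
          Complex.exp (↑(-2 * Real.pi * inner ℝ t (ξ - η / r)) * Complex.I) := by
        rw [← Complex.exp_add, ← Complex.exp_add]
        congr 1
        simp only [RCLike.inner_apply, conj_trivial]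
        push_cast
        ring
      linear_combination (𝓕 (ψ : ℝ → ℂ) η * H t) * e
    · have hi : Integrable (fun p : ℝ × ℝ => H p.1 * (𝓕 ψ) p.2) (volume.prod volume) :=
        H.integrable.mul_prod (𝓕 ψ).integrable
      simp only [← SchwartzMap.fourier_coe]
      refine hi.mono ?_ ?_
      · apply Continuous.aestronglyMeasurable
        have := (𝓕 ψ).continuous
        have := H.continuous
        simp only [Function.uncurry_def, RCLike.inner_apply, conj_trivial]
        fun_prop
      · refine Filter.Eventually.of_forall fun p => ?_
        simp only [Function.uncurry_def, norm_mul, Complex.norm_exp_ofReal_mul_I]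
        simp [mul_comm]
  rw [key]
  refine (enorm_integral_le_lintegral_enorm _).trans (le_of_eq ?_)
  congr 1; ext η
  rw [enorm_mul, enorm_mul]
  have : ‖Complex.exp (↑(-2 * Real.pi * (η * c / r)) * Complex.I)‖ₑ = 1 := by
    rw [← ofReal_norm, Complex.norm_exp_ofReal_mul_I]; simp
  rw [this, mul_one]

/-- scaled weighted norm -/
noncomputable def wN (r s : ℝ) (u : ℝ → ℂ) : ℝ≥0∞ :=
  ∫⁻ ξ : ℝ, ENNReal.ofReal ((1 + (r * ξ) ^ 2) ^ s) * ‖u ξ‖ₑ ^ 2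

lemma peetre (s : ℝ) (hs : 0 ≤ s) (a b : ℝ) :
    (1 + a ^ 2) ^ s ≤ (2 ^ s * (1 + b ^ 2) ^ s) * (1 + (a - b) ^ 2) ^ s := by
  rw [← Real.mul_rpow (by norm_num) (by positivity), ← Real.mul_rpow (by positivity) (by positivity)]
  apply Real.rpow_le_rpow (by positivity) _ hs
  nlinarith [sq_nonneg (b - (a - b)), sq_nonneg (b * (a - b))]

lemma mult_bound (s : ℝ) (hs : 0 ≤ s) (ψ H F : 𝓢(ℝ, ℂ)) (c r : ℝ) (hr : 0 < r)
    (hF : ∀ t, F t = ψ ((t - c) / r) * H t) :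
    wN r s (𝓕 (F : ℝ → ℂ)) ≤ ((∫⁻ η, ‖𝓕 (ψ : ℝ → ℂ) η‖ₑ) *
      ∫⁻ η, ‖𝓕 (ψ : ℝ → ℂ) η‖ₑ * ENNReal.ofReal (2 ^ s * (1 + η ^ 2) ^ s)) * wN r s (𝓕 (H : ℝ → ℂ)) := by
  have mψ : Measurable (𝓕 (ψ : ℝ → ℂ)) := (𝓕 ψ).continuous.measurable
  have mH : Measurable (𝓕 (H : ℝ → ℂ)) := (𝓕 H).continuous.measurable
  set A := ∫⁻ η, ‖𝓕 (ψ : ℝ → ℂ) η‖ₑ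
  set w : ℝ → ℝ≥0∞ := fun ξ => ENNReal.ofReal ((1 + (r * ξ) ^ 2) ^ s) with hw
  have mw : Measurable w := by fun_prop
  have hw2 : ∀ ξ η, w ξ ≤ ENNReal.ofReal (2 ^ s * (1 + η ^ 2) ^ s) * w (ξ - η / r) := by
    intro ξ η
    rw [hw]
    simp only
    rw [← ENNReal.ofReal_mul (by positivity)]
    apply ENNReal.ofReal_le_ofReal
    have := peetre s hs (r * ξ) η
    rwa [show r * (ξ - η / r) = r * ξ - η by field_simp]
  calc wN r s (𝓕 (F : ℝ → ℂ)) ≤ ∫⁻ ξ, w ξ * (A * ∫⁻ η, ‖𝓕 (ψ : ℝ → ℂ) η‖ₑ * ‖𝓕 (H : ℝ → ℂ) (ξ - η / r)‖ₑ ^ 2) := by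
        refine lintegral_mono fun ξ => ?_
        refine mul_le_mul_right ?_ _
        refine (pow_le_pow_left' (mult_formula ψ H F c r hF ξ) 2).trans ?_
        exact cs_lintegral (by fun_prop) (by fun_prop)
    _ = A * ∫⁻ ξ, ∫⁻ η, w ξ * (‖𝓕 (ψ : ℝ → ℂ) η‖ₑ * ‖𝓕 (H : ℝ → ℂ) (ξ - η / r)‖ₑ ^ 2) := by
        rw [← lintegral_const_mul _ (Measurable.lintegral_prod_right (by fun_prop))]
        congr 1; ext ξ
        rw [lintegral_const_mul _ (by fun_prop)]
        ring
    _ ≤ A * ∫⁻ ξ, ∫⁻ η, (‖𝓕 (ψ : ℝ → ℂ) η‖ₑ * ENNReal.ofReal (2 ^ s * (1 + η ^ 2) ^ s)) *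
          (w (ξ - η / r) * ‖𝓕 (H : ℝ → ℂ) (ξ - η / r)‖ₑ ^ 2) := by
        refine mul_le_mul_right (lintegral_mono fun ξ => lintegral_mono fun η => ?_) _
        calc _ ≤ (ENNReal.ofReal (2 ^ s * (1 + η ^ 2) ^ s) * w (ξ - η / r)) * (‖𝓕 (ψ : ℝ → ℂ) η‖ₑ * ‖𝓕 (H : ℝ → ℂ) (ξ - η / r)‖ₑ ^ 2) := by
              exact mul_le_mul_left (hw2 ξ η) _
          _ = _ := by ring
    _ = A * ∫⁻ η, ∫⁻ ξ, (‖𝓕 (ψ : ℝ → ℂ) η‖ₑ * ENNReal.ofReal (2 ^ s * (1 + η ^ 2) ^ s)) *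
          (w (ξ - η / r) * ‖𝓕 (H : ℝ → ℂ) (ξ - η / r)‖ₑ ^ 2) := by
        rw [lintegral_lintegral_swap]
        apply Measurable.aemeasurable
        simp only [Function.uncurry_def]
        fun_prop
    _ = A * ∫⁻ η, (‖𝓕 (ψ : ℝ → ℂ) η‖ₑ * ENNReal.ofReal (2 ^ s * (1 + η ^ 2) ^ s)) * wN r s (𝓕 (H : ℝ → ℂ)) := by
        congr 2; ext η
        rw [lintegral_const_mul _ (by fun_prop),
          lintegral_sub_right_eq_self (fun ξ => w ξ * ‖𝓕 (H : ℝ → ℂ) ξ‖ₑ ^ 2)]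
        rfl
    _ = _ := by
        rw [lintegral_mul_const _ (by fun_prop), mul_assoc]

lemma plancherel (H : 𝓢(ℝ, ℂ)) : ∫⁻ ξ, ‖𝓕 (H : ℝ → ℂ) ξ‖ₑ ^ 2 = ∫⁻ t, ‖H t‖ₑ ^ 2 := by
  have e : ∀ G : 𝓢(ℝ, ℂ), ∫⁻ t, ‖G t‖ₑ ^ 2 = ENNReal.ofReal (∫ t, ‖G t‖ ^ 2) := by
    intro G
    have := (G.memLp 2 volume).integrable_norm_pow (by norm_num)
    rw [ofReal_integral_eq_lintegral_ofReal (by simpa using this) (Filter.Eventually.of_forall fun _ => by positivity)]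
    simp [ENNReal.ofReal_pow]
  have := e (𝓕 H)
  rw [SchwartzMap.integral_norm_sq_fourier, ← e] at this
  exact this

lemma weight_fin (s : ℝ) (H : 𝓢(ℝ, ℂ)) :
    ∫⁻ ξ, ‖𝓕 (H : ℝ → ℂ) ξ‖ₑ * ENNReal.ofReal ((1 + ξ ^ 2) ^ s) < ∞ := by
  have h := (SchwartzMap.smulLeftCLM ℂ (fun x : ℝ => (1 + ‖x‖ ^ 2) ^ s) (𝓕 H)).integrable (μ := volume)
  have := h.2
  rw [HasFiniteIntegral] at this
  refine lt_of_le_of_lt (le_of_eq ?_) this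
  congr 1; ext ξ
  rw [SchwartzMap.smulLeftCLM_apply_apply (by fun_prop), enorm_smul, mul_comm, Real.enorm_of_nonneg (by positivity)]
  simp [SchwartzMap.fourier_coe]

lemma wN_fin (s : ℝ) (H : 𝓢(ℝ, ℂ)) : wN 1 s (𝓕 (H : ℝ → ℂ)) < ∞ := by
  obtain ⟨M, hM⟩ : ∃ M : ℝ, ∀ ξ, ‖𝓕 (H : ℝ → ℂ) ξ‖ ≤ M :=
    ⟨_, fun ξ => SchwartzMap.norm_le_seminorm ℝ (𝓕 H) ξ⟩
  refine lt_of_le_of_lt (b := ENNReal.ofReal M * ∫⁻ ξ, ‖𝓕 (H : ℝ → ℂ) ξ‖ₑ * ENNReal.ofReal ((1 + ξ ^ 2) ^ s)) ?_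
    (ENNReal.mul_lt_top ENNReal.ofReal_lt_top (weight_fin s H))
  rw [← lintegral_const_mul' _ _ ENNReal.ofReal_ne_top]
  refine lintegral_mono fun ξ => ?_
  simp only [one_mul]
  rw [mul_comm, sq, mul_assoc]
  gcongr
  rw [← ofReal_norm]
  exact ENNReal.ofReal_le_ofReal (hM ξ)

lemma poincare_low (H : 𝓢(ℝ, ℂ)) (c r : ℝ) (hr : 0 < r)
    (hH : ∀ t, t ∉ Metric.closedBall c (5 * r) → H t = 0) :
    ∫⁻ ξ in Metric.closedBall 0 (1 / (40 * r)), ‖𝓕 (H : ℝ → ℂ) ξ‖ₑ ^ 2 ≤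
      ∫⁻ ξ in (Metric.closedBall 0 (1 / (40 * r)))ᶜ, ‖𝓕 (H : ℝ → ℂ) ξ‖ₑ ^ 2 := by
  have mH : Measurable H := H.continuous.measurable
  set S := Metric.closedBall (0:ℝ) (1 / (40 * r))
  set T := ∫⁻ ξ, ‖𝓕 (H : ℝ → ℂ) ξ‖ₑ ^ 2 with hT
  have hTfin : T < ∞ := by
    have h := wN_fin 0 H
    simpa [wN] using h
  have hpt : ∀ ξ, ‖𝓕 (H : ℝ → ℂ) ξ‖ₑ ^ 2 ≤ ENNReal.ofReal (10 * r) * T := by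
    intro ξ
    have h1 : ‖𝓕 (H : ℝ → ℂ) ξ‖ₑ ≤ ∫⁻ t, (Metric.closedBall c (5 * r)).indicator 1 t * ‖H t‖ₑ := by
      rw [Real.fourier_eq]
      refine (enorm_integral_le_lintegral_enorm _).trans (le_of_eq ?_)
      congr 1; ext t
      have : ‖Real.fourierChar (-(inner ℝ t ξ)) • H t‖ₑ = ‖H t‖ₑ := by
        rw [← ofReal_norm, ← ofReal_norm, Circle.norm_smul]
      rw [this]
      by_cases ht : t ∈ Metric.closedBall c (5 * r)
      · simp [Set.indicator_of_mem ht]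
      · simp [hH t ht]
    refine (pow_le_pow_left' h1 2).trans ?_
    refine (cs_lintegral (measurable_one.indicator measurableSet_closedBall) (by fun_prop)).trans ?_
    rw [lintegral_indicator_one measurableSet_closedBall, Real.volume_closedBall, hT, plancherel,
      show 2 * (5 * r) = 10 * r by ring]
    refine mul_le_mul_right (lintegral_mono fun t => ?_) _
    refine mul_le_of_le_one_left' ?_
    exact Set.indicator_le_self' (fun _ _ => by simp) t
  have hlow : ∫⁻ ξ in S, ‖𝓕 (H : ℝ → ℂ) ξ‖ₑ ^ 2 ≤ T / 2 := by
    calc _ ≤ ∫⁻ ξ in S, ENNReal.ofReal (10 * r) * T := lintegral_mono fun ξ => hpt ξ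
      _ = T * (ENNReal.ofReal (10 * r) * ENNReal.ofReal (2 * (1 / (40 * r)))) := by
        rw [lintegral_const, Measure.restrict_apply_univ, Real.volume_closedBall]; ring
      _ = T / 2 := by
        rw [← ENNReal.ofReal_mul (by positivity), show 10 * r * (2 * (1 / (40 * r))) = 2⁻¹ by field_simp; norm_num]
        rw [ENNReal.ofReal_inv_of_pos (by norm_num)]
        simp [div_eq_mul_inv]
  have hsum := lintegral_add_compl (μ := volume) (fun ξ => ‖𝓕 (H : ℝ → ℂ) ξ‖ₑ ^ 2)
    (measurableSet_closedBall : MeasurableSet S)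
  rw [← hT] at hsum
  refine hlow.trans ?_
  by_contra hlt
  push Not at hlt
  have h2 := ENNReal.add_lt_add_of_le_of_lt (ne_top_of_le_ne_top (by
    exact (ENNReal.div_lt_top hTfin.ne (by norm_num)).ne) hlow) hlow hlt
  rw [hsum, ENNReal.add_halves] at h2
  exact lt_irrefl _ h2

lemma poincare (s : ℝ) (hs : 0 ≤ s) (H : 𝓢(ℝ, ℂ)) (c r : ℝ) (hr : 0 < r)
    (hH : ∀ t, t ∉ Metric.closedBall c (5 * r) → H t = 0) :
    wN r s (𝓕 (H : ℝ → ℂ)) ≤ (ENNReal.ofReal (2 ^ s) + 1) *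
      (ENNReal.ofReal ((1601 * r ^ 2) ^ s) * wN 1 s (𝓕 (H : ℝ → ℂ))) := by
  have hlow := poincare_low H c r hr hH
  set S := Metric.closedBall (0:ℝ) (1 / (40 * r)) with hS
  have mS : MeasurableSet S := measurableSet_closedBall
  set X := ∫⁻ ξ in Sᶜ, ENNReal.ofReal ((1 + (r * ξ) ^ 2) ^ s) * ‖𝓕 (H : ℝ → ℂ) ξ‖ₑ ^ 2 with hX
  have h1 : ∫⁻ ξ in Sᶜ, ‖𝓕 (H : ℝ → ℂ) ξ‖ₑ ^ 2 ≤ X := by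
    refine lintegral_mono fun ξ => le_mul_of_one_le_left' ?_
    rw [ENNReal.one_le_ofReal]
    exact Real.one_le_rpow (by nlinarith [sq_nonneg (r * ξ)]) hs
  have h2 : ∫⁻ ξ in S, ENNReal.ofReal ((1 + (r * ξ) ^ 2) ^ s) * ‖𝓕 (H : ℝ → ℂ) ξ‖ₑ ^ 2 ≤
      ENNReal.ofReal (2 ^ s) * ∫⁻ ξ in S, ‖𝓕 (H : ℝ → ℂ) ξ‖ₑ ^ 2 := by
    rw [← lintegral_const_mul' _ _ ENNReal.ofReal_ne_top]
    refine setLIntegral_mono' mS fun ξ hξ => ?_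
    gcongr
    have : |r * ξ| ≤ 1 := by
      rw [hS, mem_closedBall_zero_iff, Real.norm_eq_abs] at hξ
      rw [abs_mul, abs_of_pos hr]
      calc r * |ξ| ≤ r * (1 / (40 * r)) := by gcongr
        _ = 1 / 40 := by field_simp
        _ ≤ 1 := by norm_num
    have := (sq_le_one_iff_abs_le_one _).2 this
    linarith
  have h3 : X ≤ ENNReal.ofReal ((1601 * r ^ 2) ^ s) * wN 1 s (𝓕 (H : ℝ → ℂ)) := by
    unfold wN
    rw [← lintegral_const_mul' _ _ ENNReal.ofReal_ne_top]
    refine le_trans ?_ (setLIntegral_le_lintegral Sᶜ _)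
    refine setLIntegral_mono' mS.compl fun ξ hξ => ?_
    rw [← mul_assoc, ← ENNReal.ofReal_mul (by positivity), ← Real.mul_rpow (by positivity) (by positivity)]
    gcongr
    rw [hS, Set.mem_compl_iff, mem_closedBall_zero_iff, Real.norm_eq_abs, not_le] at hξ
    have : 1 / 40 ≤ |r * ξ| := by
      rw [abs_mul, abs_of_pos hr]
      calc (1:ℝ) / 40 = r * (1 / (40 * r)) := by field_simp
        _ ≤ r * |ξ| := by gcongr
    have h4 : (1 / 40) ^ 2 ≤ (r * ξ) ^ 2 := by
      rw [← sq_abs (r * ξ)]; gcongr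
    nlinarith [sq_nonneg r]
  have hsum := lintegral_add_compl (μ := volume)
    (fun ξ => ENNReal.ofReal ((1 + (r * ξ) ^ 2) ^ s) * ‖𝓕 (H : ℝ → ℂ) ξ‖ₑ ^ 2) mS
  calc wN r s (𝓕 (H : ℝ → ℂ)) ≤ ENNReal.ofReal (2 ^ s) * X + X := by
        unfold wN
        rw [← hsum]
        exact add_le_add (h2.trans (mul_le_mul_right (hlow.trans h1) _)) le_rfl
    _ = (ENNReal.ofReal (2 ^ s) + 1) * X := by ring
    _ ≤ _ := by gcongr

lemma wN_one_le (s : ℝ) (hs : 0 ≤ s) (u : ℝ → ℂ) (r : ℝ) (hr : 0 < r) (hr1 : r < 1) :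
    wN 1 s u ≤ ENNReal.ofReal ((1 / r ^ 2) ^ s) * wN r s u := by
  unfold wN
  rw [← lintegral_const_mul' _ _ ENNReal.ofReal_ne_top]
  refine lintegral_mono fun ξ => ?_
  simp only
  rw [← mul_assoc, ← ENNReal.ofReal_mul (by positivity), ← Real.mul_rpow (by positivity) (by positivity)]
  gcongr
  rw [one_div, mul_add, mul_pow r, inv_mul_cancel_left₀ (by positivity), mul_one, one_mul]
  gcongr
  exact (one_le_inv₀ (by positivity)).2 (by nlinarith)

lemma main_bound (s : ℝ) (hs : 0 ≤ s) (ψ : 𝓢(ℝ, ℂ)) : ∃ D : ℝ≥0∞, D < ∞ ∧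
    ∀ (H F : 𝓢(ℝ, ℂ)) (c cc r : ℝ), 0 < r → r < 1 →
    (∀ t, F t = ψ ((t - c) / r) * H t) →
    (∀ t, t ∉ Metric.closedBall cc (5 * r) → H t = 0) →
    wN 1 s (𝓕 (F : ℝ → ℂ)) ≤ D * wN 1 s (𝓕 (H : ℝ → ℂ)) := by
  set K := (∫⁻ η, ‖𝓕 (ψ : ℝ → ℂ) η‖ₑ) *
      ∫⁻ η, ‖𝓕 (ψ : ℝ → ℂ) η‖ₑ * ENNReal.ofReal (2 ^ s * (1 + η ^ 2) ^ s) with hK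
  have hKfin : K < ∞ := by
    refine ENNReal.mul_lt_top (by simpa using weight_fin 0 ψ) ?_
    have e : ∀ η : ℝ, ‖𝓕 (ψ : ℝ → ℂ) η‖ₑ * ENNReal.ofReal (2 ^ s * (1 + η ^ 2) ^ s) =
        ENNReal.ofReal (2 ^ s) * (‖𝓕 (ψ : ℝ → ℂ) η‖ₑ * ENNReal.ofReal ((1 + η ^ 2) ^ s)) := by
      intro η
      rw [ENNReal.ofReal_mul (by positivity)]; ring
    simp_rw [e]
    rw [lintegral_const_mul' _ _ ENNReal.ofReal_ne_top]
    exact ENNReal.mul_lt_top ENNReal.ofReal_lt_top (weight_fin s ψ)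
  refine ⟨K * (ENNReal.ofReal (2 ^ s) + 1) * ENNReal.ofReal (1601 ^ s), ?_, ?_⟩
  · exact ENNReal.mul_lt_top (ENNReal.mul_lt_top hKfin
      (ENNReal.add_lt_top.2 ⟨ENNReal.ofReal_lt_top, ENNReal.one_lt_top⟩)) ENNReal.ofReal_lt_top
  intro H F c cc r hr hr1 hF hH
  have e : ENNReal.ofReal (1601 ^ s) = ENNReal.ofReal ((1 / r ^ 2) ^ s) * ENNReal.ofReal ((1601 * r ^ 2) ^ s) := by
    rw [← ENNReal.ofReal_mul (by positivity), ← Real.mul_rpow (by positivity) (by positivity)]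
    congr 2
    field_simp
  calc wN 1 s (𝓕 (F : ℝ → ℂ)) ≤ _ := wN_one_le s hs _ r hr hr1
    _ ≤ _ := mul_le_mul_right (mult_bound s hs ψ H F c r hr hF) _
    _ ≤ _ := mul_le_mul_right (mul_le_mul_right (poincare s hs H cc r hr hH) _) _
    _ = _ := by rw [e, ← hK]; ring

lemma sob_eq (s : ℝ) (f : ℝ → ℝ) (F : 𝓢(ℝ, ℂ)) (h : ∀ t, F t = (f t : ℂ)) :
    sobolevNormSq s f = (wN 1 s (𝓕 (F : ℝ → ℂ))).toReal := by
  have e : (fun x : ℝ => (f x : ℂ)) = F := by ext t; exact (h t).symm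
  have mF : Measurable (𝓕 (F : ℝ → ℂ)) := (𝓕 F).continuous.measurable
  unfold sobolevNormSq wN
  rw [e, integral_eq_lintegral_of_nonneg_ae (Filter.Eventually.of_forall fun _ => by positivity)
    (by fun_prop)]
  congr 2; ext ξ
  rw [ENNReal.ofReal_mul (by positivity), one_mul, ENNReal.ofReal_pow (by positivity), ofReal_norm]

lemma toS (f : ℝ → ℝ) (hf : ContDiff ℝ (⊤ : ℕ∞) f) (hc : HasCompactSupport f) :
    ∃ F : 𝓢(ℝ, ℂ), ∀ t, F t = (f t : ℂ) :=
  ⟨HasCompactSupport.toSchwartzMap (f := fun t => (f t : ℂ))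
    (hc.comp_left (g := Complex.ofReal) Complex.ofReal_zero) (Complex.ofRealCLM.contDiff.comp hf), fun _ => rfl⟩

/-- For any `s ≥ 0` there is `C > 0` such that for all `x, y ∈ ℝ` with
`0 < r := |x-y|/4 < 1` and all smooth compactly supported `f, g : ℝ → ℝ` with
`supp f ⊆ (x-r, x+r)` and `supp g ⊆ (y-r, y+r)`,
`‖f+g‖_{H^s}² ≥ C (‖f‖_{H^s}² + ‖g‖_{H^s}²)`. -/
theorem sobolev_reverse_triangle_disjoint_support (s : ℝ) (hs : 0 ≤ s) :
    ∃ C > (0 : ℝ), ∀ x y : ℝ, 0 < |x - y| / 4 → |x - y| / 4 < 1 →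
      ∀ f g : ℝ → ℝ,
        ContDiff ℝ (⊤ : ℕ∞) f → HasCompactSupport f →
        ContDiff ℝ (⊤ : ℕ∞) g → HasCompactSupport g →
        tsupport f ⊆ Set.Ioo (x - |x - y| / 4) (x + |x - y| / 4) →
        tsupport g ⊆ Set.Ioo (y - |x - y| / 4) (y + |x - y| / 4) →
        sobolevNormSq s (f + g) ≥ C * (sobolevNormSq s f + sobolevNormSq s g) := by
  let b : ContDiffBump (0:ℝ) := ⟨1, 2, by norm_num, by norm_num⟩
  obtain ⟨ψ, hψ⟩ := toS b b.contDiff b.hasCompactSupport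
  have hψ1 : ∀ u, |u| ≤ 1 → ψ u = 1 := fun u hu => by
    rw [hψ, b.one_of_mem_closedBall (by simpa [b] using hu)]; simp
  have hψ0 : ∀ u, 2 ≤ |u| → ψ u = 0 := fun u hu => by
    rw [hψ, b.zero_of_le_dist (by simpa [b] using hu)]; simp
  obtain ⟨D, hD, hmain⟩ := main_bound s hs ψ
  refine ⟨1 / (2 * D.toReal + 1), by positivity, ?_⟩
  intro x y hr hr1 f g hf hfc hg hgc hfs hgs
  obtain ⟨F, hF⟩ := toS f hf hfc
  obtain ⟨G, hG⟩ := toS g hg hgc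
  obtain ⟨H, hH⟩ := toS (f + g) (hf.add hg) (hfc.add hgc)
  have hxy : |x - y| = 4 * (|x - y| / 4) := by ring
  set r := |x - y| / 4 with hrdef
  have hf0 : ∀ t, r ≤ |t - x| → f t = 0 := fun t ht => by
    refine image_eq_zero_of_notMem_tsupport fun h => ?_
    have := hfs h
    rw [Set.mem_Ioo] at this
    exact absurd (abs_lt.2 ⟨by linarith, by linarith⟩) (not_lt.2 ht)
  have hg0 : ∀ t, r ≤ |t - y| → g t = 0 := fun t ht => by
    refine image_eq_zero_of_notMem_tsupport fun h => ?_
    have := hgs h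
    rw [Set.mem_Ioo] at this
    exact absurd (abs_lt.2 ⟨by linarith, by linarith⟩) (not_lt.2 ht)
  have tri1 : ∀ t, 4 * r ≤ |t - x| + |t - y| := fun t => by
    rw [← hxy]
    have := abs_sub_le x t y
    rwa [abs_sub_comm x t] at this
  have tri2 : ∀ t, |t - x| ≤ |t - y| + 4 * r := fun t => by
    have := abs_sub_le t y x
    rwa [abs_sub_comm y x, hxy] at this
  have habs : ∀ t c, |(t - c) / r| = |t - c| / r := fun t c => by rw [abs_div, abs_of_pos hr]
  have hFH : ∀ t, F t = ψ ((t - x) / r) * H t := by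
    intro t
    rw [hF, hH]
    rcases le_or_gt |t - x| r with h | h
    · rw [hψ1 _ (by rw [habs, div_le_one hr]; exact h), Pi.add_apply,
        hg0 t (by linarith [tri1 t])]
      simp
    · rw [hf0 t h.le]
      rcases le_or_gt r |t - y| with hh | hh
      · simp [hf0 t h.le, hg0 t hh]
      · rw [hψ0 _ (by rw [habs, le_div_iff₀ hr]; linarith [tri1 t])]; simp
  have hGH : ∀ t, G t = ψ ((t - y) / r) * H t := by
    intro t
    rw [hG, hH]
    rcases le_or_gt |t - y| r with h | h
    · rw [hψ1 _ (by rw [habs, div_le_one hr]; exact h), Pi.add_apply,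
        hf0 t (by linarith [tri1 t])]
      simp
    · rw [hg0 t h.le]
      rcases le_or_gt r |t - x| with hh | hh
      · simp [hg0 t h.le, hf0 t hh]
      · rw [hψ0 _ (by rw [habs, le_div_iff₀ hr]; linarith [tri1 t])]; simp
  have hHs : ∀ t, t ∉ Metric.closedBall x (5 * r) → H t = 0 := by
    intro t ht
    rw [Metric.mem_closedBall, Real.dist_eq, not_le] at ht
    rw [hH, Pi.add_apply, hf0 t (by linarith), hg0 t (by linarith [tri2 t])]
    simp
  have hfin := wN_fin s H
  have b1 := ENNReal.toReal_mono (ENNReal.mul_lt_top hD hfin).ne (hmain H F x x r hr hr1 hFH hHs)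
  have b2 := ENNReal.toReal_mono (ENNReal.mul_lt_top hD hfin).ne (hmain H G y x r hr hr1 hGH hHs)
  rw [ENNReal.toReal_mul, ← sob_eq s _ H hH] at b1 b2
  rw [← sob_eq s _ F hF] at b1
  rw [← sob_eq s _ G hG] at b2
  have hnn : 0 ≤ sobolevNormSq s (f + g) := by rw [sob_eq s _ H hH]; positivity
  have hDn : 0 ≤ D.toReal := by positivity
  rw [ge_iff_le, one_div, inv_mul_le_iff₀ (by positivity)]
  linarith
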